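/- Let A ∈ ℝ^{N×N}, B ∈ ℝ^{N×m}, C ∈ ℝ^{p×N} with all eigenvalues of A having negative real part, and suppose there is a diagonal Σ = diag(σ₁, …, σ_N), σ₁ ≥ … ≥ σ_N > 0, with AΣ + ΣAᵀ + BBᵀ = 0 and AᵀΣ + ΣA + CᵀC = 0. Partition A = [[A₁₁, A₁₂], [A₂₁, A₂₂]] conformally with Σ = diag(Σ₁, Σ₂), Σ₁ of size r. Then every eigenvalue of the truncated matrix A₁₁ has nonpositive real part; and if moreover σ_r > σ_{r+1}, then every eigenvalue of A₁₁ has strictly negative real part, i.e., balanced truncation preserves asymptotic stability. -/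

import Mathlib

open Matrix

noncomputable section

/-- Complexification of a real matrix. -/
def toC {a b : Type*} (M : Matrix a b ℝ) : Matrix a b ℂ :=
  M.map Complex.ofReal

/-!
A subsystem of a balanced realization is again balanced. Testing the observability equation against
an eigenvector `v` of the state matrix gives `2 Re μ ⟨v, Σv⟩ + ‖C v‖² = 0`, so `Re μ ≤ 0` always and
`C v = 0` if `Re μ = 0`. In the latter case, write `A₁` for the retained columns of `A`. The
observability equation yields `Aᴴ₁ Σ₁ v = -Σ A₁ v`, so `Σ₁ v` satisfies the eigenvector equation of
`A₁₁ᴴ` for `-μ`, and the dual system yields in turn `A₁ Σ₁² v = Σ² A₁ v`. Hence `Σ₁²` preserves the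
`μ`-eigenspace of `A₁₁`. Take `v` there with `Σ₁² v = c v`: then `(c - σⱼ²) (A₁ v)ⱼ = 0`, and
`c - σⱼ² ≠ 0` for every discarded state `j`, so `v` extended by zero is an eigenvector of `A` on the
imaginary axis.
-/

section Eigenvectors

variable {K n : Type*} [Field K] [Fintype n] [DecidableEq n]

theorem mem_spectrum_iff_exists_mulVec_eq_smul (A : Matrix n n K) (μ : K) :
    μ ∈ spectrum K A ↔ ∃ v ≠ 0, A *ᵥ v = μ • v := by
  rw [← spectrum_toLin', ← Module.End.hasEigenvalue_iff_mem_spectrum,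
    Module.End.hasEigenvalue_iff, Submodule.ne_bot_iff]
  simp only [Module.End.mem_eigenspace_iff, toLin'_apply, and_comm, ne_eq]

theorem det_sub_smul_one_eq_zero_iff_mem_spectrum (A : Matrix n n K) (μ : K) :
    (A - μ • (1 : Matrix n n K)).det = 0 ↔ μ ∈ spectrum K A := by
  rw [mem_spectrum_iff_exists_mulVec_eq_smul, ← exists_mulVec_eq_zero_iff]
  simp only [sub_mulVec, smul_mulVec, one_mulVec, sub_eq_zero]

theorem exists_eigenvector_mem_of_mapsTo {V : Type*} [AddCommGroup V] [Module K V]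
    [IsAlgClosed K] [FiniteDimensional K V] {f : Module.End K V} {W : Submodule K V}
    (hW : W ≠ ⊥) (hf : ∀ x ∈ W, f x ∈ W) : ∃ c : K, ∃ x ∈ W, x ≠ 0 ∧ f x = c • x := by
  have : Nontrivial W := Submodule.nontrivial_iff_ne_bot.mpr hW
  obtain ⟨c, hc⟩ := Module.End.exists_eigenvalue (f.restrict hf)
  obtain ⟨x, hx⟩ := hc.exists_hasEigenvector
  exact ⟨c, x, x.2, fun h => hx.2 (Subtype.ext h), congrArg Subtype.val hx.apply_eq_smul⟩

end Eigenvectors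

theorem mulVec_extend_zero {R m n k : Type*} [NonUnitalNonAssocSemiring R] [Fintype n] [Fintype k]
    (A : Matrix m n R) {e : k → n} (he : Function.Injective e) (v : k → R) :
    A *ᵥ Function.extend e v 0 = A.submatrix id e *ᵥ v := by
  ext i
  refine (Fintype.sum_of_injective e he _ _ (fun j hj => ?_) fun j => ?_).symm
  · rw [Function.extend_apply' _ _ _ hj, Pi.zero_apply, mul_zero]
  · simp only [he.extend_apply, submatrix_apply, id]

section Lyapunov

variable {n l : Type*} [Fintype n] [Fintype l]

theorem lyapunov_energy_identity {R : Type*} [CommRing R] [StarRing R] {A P : Matrix n n R}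
    {C : Matrix l n R} (h : Aᴴ * P + P * A + Cᴴ * C = 0) {μ : R} {v : n → R}
    (hv : A *ᵥ v = μ • v) :
    (star μ + μ) * (star v ⬝ᵥ P *ᵥ v) + star (C *ᵥ v) ⬝ᵥ C *ᵥ v = 0 := by
  have hAP : star v ⬝ᵥ (Aᴴ * P) *ᵥ v = star μ * (star v ⬝ᵥ P *ᵥ v) := by
    rw [← mulVec_mulVec, dotProduct_mulVec, ← star_mulVec, hv, star_smul, smul_dotProduct,
      smul_eq_mul]
  have hPA : star v ⬝ᵥ (P * A) *ᵥ v = μ * (star v ⬝ᵥ P *ᵥ v) := by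
    rw [← mulVec_mulVec, hv, mulVec_smul, dotProduct_smul, smul_eq_mul]
  have hCC : star v ⬝ᵥ (Cᴴ * C) *ᵥ v = star (C *ᵥ v) ⬝ᵥ C *ᵥ v := by
    rw [← mulVec_mulVec, dotProduct_mulVec, ← star_mulVec]
  rw [add_mul, ← hAP, ← hPA, ← hCC, ← dotProduct_add, ← dotProduct_add, ← add_mulVec,
    ← add_mulVec, h, zero_mulVec, dotProduct_zero]

open scoped ComplexOrder in
theorem re_nonpos_of_lyapunov [DecidableEq n] {A P : Matrix n n ℂ} {C : Matrix l n ℂ}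
    (hP : P.PosDef) (h : Aᴴ * P + P * A + Cᴴ * C = 0) {μ : ℂ} (hμ : μ ∈ spectrum ℂ A) :
    μ.re ≤ 0 := by
  obtain ⟨v, hv₀, hv⟩ := (mem_spectrum_iff_exists_mulVec_eq_smul A μ).mp hμ
  by_contra! hre
  have hcoeff : 0 < star μ + μ := by
    rw [add_comm, Complex.star_def, Complex.add_conj]
    exact_mod_cast mul_pos two_pos hre
  exact (add_pos_of_pos_of_nonneg (mul_pos hcoeff (hP.dotProduct_mulVec_pos hv₀))
    (dotProduct_star_self_nonneg (C *ᵥ v))).ne' (lyapunov_energy_identity h hv)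

open scoped ComplexOrder in
theorem mulVec_eq_zero_of_lyapunov {A P : Matrix n n ℂ} {C : Matrix l n ℂ}
    (h : Aᴴ * P + P * A + Cᴴ * C = 0) {μ : ℂ} (hre : μ.re = 0) {v : n → ℂ}
    (hv : A *ᵥ v = μ • v) : C *ᵥ v = 0 := by
  have hcoeff : star μ + μ = 0 := by
    rw [add_comm, Complex.star_def, Complex.add_conj, hre, mul_zero, Complex.ofReal_zero]
  have henergy := lyapunov_energy_identity h hv
  rw [hcoeff, zero_mul, zero_add] at henergy
  exact dotProduct_star_self_eq_zero.mp henergy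

end Lyapunov

section Complexification

variable {a b c : Type*}

theorem toC_zero : toC (0 : Matrix a b ℝ) = 0 :=
  Matrix.map_zero _ Complex.ofReal_zero

theorem toC_add (M N : Matrix a b ℝ) : toC (M + N) = toC M + toC N :=
  Matrix.map_add _ Complex.ofReal_add M N

theorem toC_mul [Fintype b] (M : Matrix a b ℝ) (N : Matrix b c ℝ) :
    toC (M * N) = toC M * toC N :=
  Matrix.map_mul (f := Complex.ofRealHom)

theorem conjTranspose_toC (M : Matrix a b ℝ) : (toC M)ᴴ = toC Mᵀ :=
  Matrix.ext fun _ _ => Complex.conj_ofReal _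

end Complexification

section Gramian

variable {n : Type*} [DecidableEq n]

/-- The common Gramian `Σ = diag(σ)` of a balanced realization, as a complex matrix. -/
def balancedGramian (σ : n → ℝ) : Matrix n n ℂ :=
  toC (diagonal σ)

theorem balancedGramian_eq_diagonal (σ : n → ℝ) :
    balancedGramian σ = diagonal fun i => (σ i : ℂ) :=
  diagonal_map Complex.ofReal_zero

theorem balancedGramian_mulVec_apply [Fintype n] (σ : n → ℝ) (v : n → ℂ) (i : n) :
    (balancedGramian σ *ᵥ v) i = σ i * v i := by
  rw [balancedGramian_eq_diagonal, mulVec_diagonal]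

open scoped ComplexOrder in
theorem posDef_balancedGramian {σ : n → ℝ} (hσ : ∀ i, 0 < σ i) : (balancedGramian σ).PosDef := by
  rw [balancedGramian_eq_diagonal]
  exact PosDef.diagonal fun i => by exact_mod_cast hσ i

theorem mul_balancedGramian_submatrix {m k l : Type*} [Fintype n] [Fintype k] [DecidableEq k]
    (A : Matrix m n ℂ) (σ : n → ℝ) (f : l → m) (e : k → n) :
    (A * balancedGramian σ).submatrix f e = A.submatrix f e * balancedGramian (σ ∘ e) := by
  ext i j
  simp only [balancedGramian_eq_diagonal, submatrix_apply, mul_diagonal, Function.comp_apply]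

theorem balancedGramian_mul_submatrix {m k l : Type*} [Fintype n] [Fintype k] [DecidableEq k]
    (A : Matrix n m ℂ) (σ : n → ℝ) (e : k → n) (f : l → m) :
    (balancedGramian σ * A).submatrix e f = balancedGramian (σ ∘ e) * A.submatrix e f := by
  ext i j
  simp only [balancedGramian_eq_diagonal, submatrix_apply, diagonal_mul, Function.comp_apply]

end Gramian

/-- A balanced realization `(A, B, C)` over `ℂ`: both Gramians equal `diag(σ)` with positive
Hankel singular values `σ`. The values are not required to be sorted, so that every subset of the
states can be retained by a truncation. -/
structure IsBalanced {n k l : Type*} [Fintype n] [DecidableEq n] [Fintype k] [Fintype l]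
    (A : Matrix n n ℂ) (B : Matrix n k ℂ) (C : Matrix l n ℂ) (σ : n → ℝ) : Prop where
  pos : ∀ i, 0 < σ i
  controllability : A * balancedGramian σ + balancedGramian σ * Aᴴ + B * Bᴴ = 0
  observability : Aᴴ * balancedGramian σ + balancedGramian σ * A + Cᴴ * C = 0

namespace IsBalanced

variable {n k l s : Type*} [Fintype n] [DecidableEq n] [Fintype k] [Fintype l] [Fintype s]
  [DecidableEq s] {A : Matrix n n ℂ} {B : Matrix n k ℂ} {C : Matrix l n ℂ} {σ : n → ℝ}

theorem of_real {A : Matrix n n ℝ} {B : Matrix n k ℝ} {C : Matrix l n ℝ} (hσ : ∀ i, 0 < σ i)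
    (hP : A * diagonal σ + diagonal σ * Aᵀ + B * Bᵀ = 0)
    (hQ : Aᵀ * diagonal σ + diagonal σ * A + Cᵀ * C = 0) :
    IsBalanced (toC A) (toC B) (toC C) σ := by
  have hP' := congrArg toC hP
  have hQ' := congrArg toC hQ
  simp only [toC_add, toC_mul, toC_zero, ← conjTranspose_toC] at hP' hQ'
  exact ⟨hσ, hP', hQ'⟩

theorem dual (h : IsBalanced A B C σ) : IsBalanced Aᴴ Cᴴ Bᴴ σ where
  pos := h.pos
  controllability := by simpa only [conjTranspose_conjTranspose] using h.observability
  observability := by simpa only [conjTranspose_conjTranspose] using h.controllability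

theorem submatrix (h : IsBalanced A B C σ) (e : s → n) :
    IsBalanced (A.submatrix e e) (B.submatrix e id) (C.submatrix id e) (σ ∘ e) where
  pos i := h.pos (e i)
  controllability := by
    have hee := congrArg (fun M => M.submatrix e e) h.controllability
    simpa only [submatrix_add, Pi.add_apply, mul_balancedGramian_submatrix,
      balancedGramian_mul_submatrix, submatrix_mul B Bᴴ e id e Function.bijective_id,
      conjTranspose_submatrix, submatrix_zero, Pi.zero_apply] using hee
  observability := by
    have hee := congrArg (fun M => M.submatrix e e) h.observability
    simpa only [submatrix_add, Pi.add_apply, mul_balancedGramian_submatrix,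
      balancedGramian_mul_submatrix, submatrix_mul Cᴴ C e id e Function.bijective_id,
      conjTranspose_submatrix, submatrix_zero, Pi.zero_apply] using hee

theorem re_nonpos (h : IsBalanced A B C σ) {μ : ℂ} (hμ : μ ∈ spectrum ℂ A) : μ.re ≤ 0 :=
  re_nonpos_of_lyapunov (posDef_balancedGramian h.pos) h.observability hμ

section ImaginaryAxis

variable (h : IsBalanced A B C σ) (e : s → n) {μ : ℂ} (hre : μ.re = 0) {v : s → ℂ}
  (hv : A.submatrix e e *ᵥ v = μ • v)
include h hre hv

theorem conjTranspose_mulVec_gramian_mulVec :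
    Aᴴ.submatrix id e *ᵥ (balancedGramian (σ ∘ e) *ᵥ v) =
      -(balancedGramian σ *ᵥ (A.submatrix id e *ᵥ v)) := by
  have hCv : C.submatrix id e *ᵥ v = 0 :=
    mulVec_eq_zero_of_lyapunov (h.submatrix e).observability hre hv
  have hcols : Aᴴ.submatrix id e * balancedGramian (σ ∘ e) + balancedGramian σ * A.submatrix id e
      + Cᴴ * C.submatrix id e = 0 := by
    have hobs := congrArg (fun M => M.submatrix id e) h.observability
    simpa only [submatrix_add, Pi.add_apply, mul_balancedGramian_submatrix,
      balancedGramian_mul_submatrix, submatrix_mul Cᴴ C id id e Function.bijective_id,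
      submatrix_id_id, submatrix_zero, Pi.zero_apply, Function.comp_id] using hobs
  have hcols_v := congrArg (· *ᵥ v) hcols
  simp only [add_mulVec, ← mulVec_mulVec, hCv, mulVec_zero, add_zero, zero_mulVec] at hcols_v
  exact eq_neg_of_add_eq_zero_left hcols_v

theorem conjTranspose_submatrix_mulVec_gramian_mulVec :
    Aᴴ.submatrix e e *ᵥ (balancedGramian (σ ∘ e) *ᵥ v) =
      (-μ) • (balancedGramian (σ ∘ e) *ᵥ v) := by
  ext i
  calc (Aᴴ.submatrix e e *ᵥ (balancedGramian (σ ∘ e) *ᵥ v)) i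
      = -(balancedGramian σ *ᵥ (A.submatrix id e *ᵥ v)) (e i) :=
        congrFun (h.conjTranspose_mulVec_gramian_mulVec e hre hv) (e i)
    _ = -(σ (e i) * (A.submatrix e e *ᵥ v) i) := by rw [balancedGramian_mulVec_apply]; rfl
    _ = ((-μ) • (balancedGramian (σ ∘ e) *ᵥ v)) i := by
        simp only [hv, Pi.smul_apply, balancedGramian_mulVec_apply, Function.comp_apply,
          smul_eq_mul]
        ring

theorem mulVec_gramian_sq_mulVec :
    A.submatrix id e *ᵥ (balancedGramian (σ ∘ e) *ᵥ (balancedGramian (σ ∘ e) *ᵥ v)) =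
      balancedGramian σ *ᵥ (balancedGramian σ *ᵥ (A.submatrix id e *ᵥ v)) := by
  have hre' : (-μ).re = 0 := by rw [Complex.neg_re, hre, neg_zero]
  have hdual := h.dual.conjTranspose_mulVec_gramian_mulVec e hre'
    (h.conjTranspose_submatrix_mulVec_gramian_mulVec e hre hv)
  rwa [conjTranspose_conjTranspose, h.conjTranspose_mulVec_gramian_mulVec e hre hv, mulVec_neg,
    neg_neg] at hdual

theorem submatrix_mulVec_gramian_sq_mulVec :
    A.submatrix e e *ᵥ (balancedGramian (σ ∘ e) *ᵥ (balancedGramian (σ ∘ e) *ᵥ v)) =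
      μ • (balancedGramian (σ ∘ e) *ᵥ (balancedGramian (σ ∘ e) *ᵥ v)) := by
  have hre' : (-μ).re = 0 := by rw [Complex.neg_re, hre, neg_zero]
  have hdual := h.dual.conjTranspose_submatrix_mulVec_gramian_mulVec e hre'
    (h.conjTranspose_submatrix_mulVec_gramian_mulVec e hre hv)
  rwa [conjTranspose_conjTranspose, neg_neg] at hdual

theorem mulVec_apply_eq_zero_of_gramian_sq_mulVec_eq_smul {c : ℂ}
    (hc : balancedGramian (σ ∘ e) *ᵥ (balancedGramian (σ ∘ e) *ᵥ v) = c • v) (hv₀ : v ≠ 0) {j : n}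
    (hj : ∀ i, σ (e i) ≠ σ j) : (A.submatrix id e *ᵥ v) j = 0 := by
  obtain ⟨i, hi⟩ := Function.ne_iff.mp hv₀
  have hcσ : c = σ (e i) ^ 2 := by
    have hcoord := congrFun hc i
    simp only [balancedGramian_mulVec_apply, Pi.smul_apply, smul_eq_mul, Function.comp_apply]
      at hcoord
    exact mul_right_cancel₀ hi (by linear_combination -hcoord)
  have hgap : (σ (e i) : ℂ) ^ 2 - σ j ^ 2 ≠ 0 := by
    rw [sub_ne_zero]
    exact_mod_cast fun hsq => hj i ((sq_eq_sq₀ (h.pos _).le (h.pos j).le).mp hsq)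
  have hintertwine := congrFun (h.mulVec_gramian_sq_mulVec e hre hv) j
  simp only [hc, hcσ, mulVec_smul, Pi.smul_apply, smul_eq_mul, balancedGramian_mulVec_apply]
    at hintertwine
  exact (mul_eq_zero.mp (by linear_combination hintertwine)).resolve_left hgap

end ImaginaryAxis

theorem mem_spectrum_of_mem_spectrum_submatrix (h : IsBalanced A B C σ) (e : s ↪ n)
    (hgap : ∀ i, ∀ j ∉ Set.range e, σ (e i) ≠ σ j) {μ : ℂ} (hre : μ.re = 0)
    (hμ : μ ∈ spectrum ℂ (A.submatrix e e)) : μ ∈ spectrum ℂ A := by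
  have hW : Module.End.eigenspace (toLin' (A.submatrix e e)) μ ≠ ⊥ := by
    rwa [← Module.End.hasEigenvalue_iff, Module.End.hasEigenvalue_iff_mem_spectrum,
      spectrum_toLin']
  obtain ⟨c, v, hvW, hv₀, hc⟩ := exists_eigenvector_mem_of_mapsTo
    (f := toLin' (balancedGramian (σ ∘ e)) * toLin' (balancedGramian (σ ∘ e))) hW fun v hv =>
      Module.End.mem_eigenspace_iff.mpr
        (h.submatrix_mulVec_gramian_sq_mulVec e hre (Module.End.mem_eigenspace_iff.mp hv))
  have hv : A.submatrix e e *ᵥ v = μ • v := Module.End.mem_eigenspace_iff.mp hvW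
  refine (mem_spectrum_iff_exists_mulVec_eq_smul A μ).mpr
    ⟨Function.extend e v 0, fun h₀ => hv₀ ?_, ?_⟩
  · rw [← Function.extend_comp e.injective v 0, h₀, Pi.zero_comp]
  rw [mulVec_extend_zero A e.injective]
  ext j
  rw [Pi.smul_apply]
  by_cases hj : j ∈ Set.range e
  · obtain ⟨i, rfl⟩ := hj
    rw [e.injective.extend_apply]
    exact congrFun hv i
  · rw [Function.extend_apply' _ _ _ hj, Pi.zero_apply, smul_zero]
    exact h.mulVec_apply_eq_zero_of_gramian_sq_mulVec_eq_smul e hre hv hc hv₀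
      fun i => hgap i j hj

end IsBalanced

theorem ne_of_antitone_of_lt_pred {N : ℕ} {α : Type*} [Preorder α] {σ : Fin N → α}
    (hσ : Antitone σ) {r : ℕ} (hr : r < N) (hgap : σ ⟨r, hr⟩ < σ ⟨r - 1, by omega⟩)
    (i : Fin r) (j : Fin N) (hj : j ∉ Set.range (Fin.castLE hr.le)) :
    σ (Fin.castLE hr.le i) ≠ σ j := by
  have hrj : r ≤ j := not_lt.mp fun hlt => hj ⟨⟨j, hlt⟩, rfl⟩
  exact (((hσ (Fin.mk_le_of_le_val hrj)).trans_lt hgap).trans_le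
    (hσ (Fin.mk_le_mk.mpr (Nat.le_sub_one_of_lt i.isLt)))).ne'

theorem balanced_truncation_preserves_stability_general {n k l s : Type*} [Fintype n]
    [DecidableEq n] [Fintype k] [Fintype l] [Fintype s] [DecidableEq s] {A : Matrix n n ℂ}
    {B : Matrix n k ℂ} {C : Matrix l n ℂ} {σ : n → ℝ} (h : IsBalanced A B C σ)
    (hA : ∀ μ ∈ spectrum ℂ A, μ.re < 0) (e : s ↪ n) :
    (∀ μ ∈ spectrum ℂ (A.submatrix e e), μ.re ≤ 0) ∧
    ((∀ i, ∀ j ∉ Set.range e, σ (e i) ≠ σ j) →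
      ∀ μ ∈ spectrum ℂ (A.submatrix e e), μ.re < 0) := by
  have hnonpos : ∀ μ ∈ spectrum ℂ (A.submatrix e e), μ.re ≤ 0 :=
    fun _ hμ => (h.submatrix e).re_nonpos hμ
  refine ⟨hnonpos, fun hgap μ hμ => (hnonpos μ hμ).lt_of_ne fun hre => ?_⟩
  exact (hA μ (h.mem_spectrum_of_mem_spectrum_submatrix e hgap hre hμ)).ne hre

/-- Balanced truncation preserves (asymptotic) stability: for a balanced asymptotically
stable realization `(A, B, C)` with Gramians `P = Q = Σ = diag(σ₁ ≥ … ≥ σ_N > 0)` and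
conformal partitioning with `Σ₁` of size `r`, every eigenvalue of the truncated matrix
`A₁₁` has nonpositive real part; and if moreover `σ_r > σ_{r+1}`, every eigenvalue of
`A₁₁` has strictly negative real part. -/
theorem balanced_truncation_preserves_stability {N m p : ℕ}
    (A : Matrix (Fin N) (Fin N) ℝ) (B : Matrix (Fin N) (Fin m) ℝ)
    (C : Matrix (Fin p) (Fin N) ℝ) (σ : Fin N → ℝ)
    (hA : ∀ μ : ℂ, (toC A - μ • (1 : Matrix (Fin N) (Fin N) ℂ)).det = 0 → μ.re < 0)
    (hσpos : ∀ i, 0 < σ i) (hσmono : ∀ i j : Fin N, i ≤ j → σ j ≤ σ i)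
    (hlyapP : A * Matrix.diagonal σ + Matrix.diagonal σ * Aᵀ + B * Bᵀ = 0)
    (hlyapQ : Aᵀ * Matrix.diagonal σ + Matrix.diagonal σ * A + Cᵀ * C = 0)
    (r : ℕ) (hrN : r ≤ N)
    (A₁₁ : Matrix (Fin r) (Fin r) ℝ)
    (hA₁₁ : A₁₁ = A.submatrix (Fin.castLE hrN) (Fin.castLE hrN)) :
    (∀ μ : ℂ, (toC A₁₁ - μ • (1 : Matrix (Fin r) (Fin r) ℂ)).det = 0 → μ.re ≤ 0) ∧
    (∀ (hr1 : 1 ≤ r) (hrN' : r < N), σ ⟨r, hrN'⟩ < σ ⟨r - 1, by omega⟩ →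
      ∀ μ : ℂ, (toC A₁₁ - μ • (1 : Matrix (Fin r) (Fin r) ℂ)).det = 0 → μ.re < 0) := by
  subst hA₁₁
  simp only [det_sub_smul_one_eq_zero_iff_mem_spectrum] at hA ⊢
  have h := balanced_truncation_preserves_stability_general (.of_real hσpos hlyapP hlyapQ) hA
    (Fin.castLEEmb hrN)
  exact ⟨h.1, fun _ hrN' hgap => h.2 (ne_of_antitone_of_lt_pred hσmono hrN' hgap)⟩
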